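/- Let X, Y be Polish spaces, g : Y → [1,∞) continuous, and let P be a Borel probability measure on X × P(Y) with ∫ (f(x) + ∫ g dp) P(dx,dp) < ∞ for some continuous f : X → [1,∞). Then P gives full mass to X × P_g(Y), where P_g(Y) = {p : ∫ g dp < ∞}; moreover the space P_{f⊕ĝ}(X × P(Y)) equals P_{f⊕ĝ}(X × P_g(Y)) and their topologies coincide, where ĝ(p) = ∫ g dp. -/

import Mathlib

/-!
Write `ĝ(p) = ∫ g dp`. Finiteness of the moment forces `ĝ < ∞` almost everywhere, which is the full
mass statement; it also makes the value of the Bochner integral at non-integrable `p` irrelevant.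

For the topologies, one direction only uses that a bounded continuous function on `X × P(Y)` is one
on `X × P(Y) × ℝ`. In the other, `ĝ` is merely lower semicontinuous, but it is the increasing limit
of the continuous functions `ĝₙ(p) = ∫ min(g, n) dp`. With `fₙ = min(f, n)`,
`∫ |ĝ - ĝₙ| dQ ≤ ∫ (f ⊕ ĝ) dQ - ∫ (fₙ ⊕ ĝₙ) dQ`. Along `Q = Pₖ` the right side converges, by
convergence of moments and weak convergence, to its value at `Q = P`, which is small for large `n`
by dominated convergence. So `ĝ` is an `L¹` limit of bounded continuous functions, eventually
uniformly in `k`, and for Lipschitz `ψ` the function `ψ(x, p, ĝ(p))` may be replaced by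
`ψ(x, p, ĝₙ(p))` (`tendsto_graph`); Lipschitz test functions suffice.

All of this needs continuous functions on `X × P(Y)` to be measurable for the product of the Borel
σ-algebra with the evaluation (Giry) σ-algebra. By the portmanteau theorem the weak topology on
`P(Y)` has a countable subbasis of sets `{p | r < p U}` with `U` open (`prob_eq_generateFrom`), so
it is second countable and its open sets are Giry-measurable
(`prob_secondCountable_opensMeasurable`).
-/

open MeasureTheory Filter Topology

/-- The subspace σ-algebra on the space of probability measures. -/
instance probMeasurableSpace {Y : Type*} [MeasurableSpace Y] :
    MeasurableSpace (ProbabilityMeasure Y) :=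
  MeasurableSpace.comap (fun p => (p : Measure Y)) inferInstance

/-! ### The weak topology and the Giry σ-algebra on `P(Y)` -/

/-- Finite unions of members of a countable basis `b` of `Y`, together with rational levels, give a
countable subbasis of the weak topology by Giry-measurable sets. -/
theorem prob_eq_generateFrom {Y : Type*} [MeasurableSpace Y] [TopologicalSpace Y] [PolishSpace Y]
    [BorelSpace Y] {b : Set (Set Y)} (hb : TopologicalSpace.IsTopologicalBasis b) (hc : b.Countable) :
    (inferInstance : TopologicalSpace (ProbabilityMeasure Y)) =
      TopologicalSpace.generateFrom
        ((fun q : Set (Set Y) × ℚ => {p : ProbabilityMeasure Y |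
          Real.toNNReal q.2 < p (⋃ t ∈ q.1, t)}) '' ({T | T.Finite ∧ T ⊆ b} ×ˢ Set.univ)) := by
  set S := ((fun q : Set (Set Y) × ℚ => {p : ProbabilityMeasure Y |
          Real.toNNReal q.2 < p (⋃ t ∈ q.1, t)}) '' ({T | T.Finite ∧ T ⊆ b} ×ˢ Set.univ)) with hS
  have hSc : S.Countable :=
    ((Set.countable_ofPred_finite_subset hc).prod Set.countable_univ).image _
  apply le_antisymm
  · apply le_generateFrom
    rintro _ ⟨⟨T, r⟩, ⟨⟨hTf, hTb⟩, -⟩, rfl⟩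
    rw [isOpen_iff_mem_nhds]
    intro p hp
    have hU : IsOpen (⋃ t ∈ T, t) := isOpen_biUnion fun t ht => hb.isOpen (hTb ht)
    have h1 := ProbabilityMeasure.le_liminf_measure_open_of_tendsto
      (μ := p) (μs := id) (L := 𝓝 p) tendsto_id hU
    have h2 : ((Real.toNNReal r : NNReal) : ENNReal) < (p : Measure Y) (⋃ t ∈ T, t) := by
      rw [← ProbabilityMeasure.ennreal_coeFn_eq_coeFn_toMeasure]
      exact_mod_cast hp
    filter_upwards [eventually_lt_of_lt_liminf (h2.trans_le h1)] with p' hp'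
    rw [← ProbabilityMeasure.ennreal_coeFn_eq_coeFn_toMeasure] at hp'
    exact_mod_cast hp'
  · apply le_of_nhds_le_nhds
    intro p
    have hcg : (@nhds _ (TopologicalSpace.generateFrom S) p).IsCountablyGenerated := by
      have := @SecondCountableTopology.mk _ (TopologicalSpace.generateFrom S) ⟨S, hSc, rfl⟩
      infer_instance
    have : Tendsto (fun p : ProbabilityMeasure Y => p)
        (@nhds _ (TopologicalSpace.generateFrom S) p) (𝓝 p) := by
      apply tendsto_of_forall_isOpen_le_liminf'
      intro G hG
      refine le_of_forall_lt fun c hc => ?_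
      lift c to NNReal using ne_top_of_lt hc
      rw [← ProbabilityMeasure.ennreal_coeFn_eq_coeFn_toMeasure, ENNReal.coe_lt_coe,
        NNReal.lt_iff_exists_rat_btwn] at hc
      obtain ⟨r, -, hcr, hr⟩ := hc
      obtain ⟨T, hTb, hT, hTG⟩ := ProbabilityMeasure.exists_lt_measure_biUnion_of_isOpen (S := b) p
        (fun u hu x hx => by
          obtain ⟨s, hs, hxs, hsu⟩ := hb.exists_subset_of_mem_open hx hu
          exact ⟨s, hs, (hb.isOpen hs).mem_nhds hxs, hsu⟩) hG hr
      refine lt_of_lt_of_le (ENNReal.coe_lt_coe.2 hcr) ?_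
      apply le_liminf_of_le
      · isBoundedDefault
      have hmem : {p : ProbabilityMeasure Y | Real.toNNReal r < p (⋃ t ∈ T, t)} ∈
          @nhds _ (TopologicalSpace.generateFrom S) p := by
        refine @IsOpen.mem_nhds (ProbabilityMeasure Y) (TopologicalSpace.generateFrom S) p
          {p : ProbabilityMeasure Y | Real.toNNReal r < p (⋃ t ∈ T, t)} ?_ hT
        refine TopologicalSpace.isOpen_generateFrom_of_mem ?_
        exact ⟨⟨(T : Set (Set Y)), r⟩, ⟨⟨T.finite_toSet, fun t ht => hTb t ht⟩, trivial⟩, by simp⟩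
      filter_upwards [hmem] with p' hp'
      calc ((Real.toNNReal r : NNReal) : ENNReal) ≤ (p' (⋃ t ∈ T, t) : NNReal) := by
            exact_mod_cast (le_of_lt hp')
        _ ≤ (p' : Measure Y) G := by
            rw [ProbabilityMeasure.ennreal_coeFn_eq_coeFn_toMeasure]
            exact measure_mono hTG
    exact this

theorem prob_measurable_apply {Y : Type*} [MeasurableSpace Y] {s : Set Y} (hs : MeasurableSet s) :
    Measurable fun p : ProbabilityMeasure Y => (p : Measure Y) s :=
  (Measure.measurable_coe hs).comp (comap_measurable _)

theorem prob_secondCountable_opensMeasurable (Y : Type*) [MeasurableSpace Y] [TopologicalSpace Y]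
    [PolishSpace Y] [BorelSpace Y] :
    SecondCountableTopology (ProbabilityMeasure Y) ∧
      OpensMeasurableSpace (ProbabilityMeasure Y) := by
  have hb := TopologicalSpace.isBasis_countableBasis Y
  have hc := TopologicalSpace.countable_countableBasis Y
  have h := prob_eq_generateFrom hb hc
  have : SecondCountableTopology (ProbabilityMeasure Y) :=
    ⟨_, ((Set.countable_ofPred_finite_subset hc).prod Set.countable_univ).image _, h⟩
  refine ⟨this, ⟨?_⟩⟩
  rw [borel_eq_generateFrom_of_subbasis h]
  apply MeasurableSpace.generateFrom_le
  rintro _ ⟨⟨T, r⟩, ⟨⟨hTf, hTb⟩, -⟩, rfl⟩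
  have hU : IsOpen (⋃ t ∈ T, t) := isOpen_biUnion fun t ht => hb.isOpen (hTb ht)
  have : {p : ProbabilityMeasure Y | Real.toNNReal r < p (⋃ t ∈ T, t)} =
      {p : ProbabilityMeasure Y | ((Real.toNNReal r : NNReal) : ENNReal) < (p : Measure Y) (⋃ t ∈ T, t)} := by
    ext p
    rw [Set.mem_ofPred_eq, Set.mem_ofPred_eq,
      ← ProbabilityMeasure.ennreal_coeFn_eq_coeFn_toMeasure, ENNReal.coe_lt_coe]
  change MeasurableSet {p : ProbabilityMeasure Y | Real.toNNReal r < p (⋃ t ∈ T, t)}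
  rw [this]
  exact measurableSet_lt measurable_const (prob_measurable_apply hU.measurableSet)

/-! ### Measurability and integrability of moments -/

theorem prob_measurable_lintegral {Y : Type*} [MeasurableSpace Y] {φ : Y → ENNReal}
    (hφ : Measurable φ) : Measurable fun p : ProbabilityMeasure Y => ∫⁻ y, φ y ∂(p : Measure Y) :=
  (Measure.measurable_lintegral hφ).comp (comap_measurable _)

theorem prob_measurable_integral {Y : Type*} [MeasurableSpace Y] {g : Y → ℝ}
    (hg : Measurable g) (hg0 : ∀ y, 0 ≤ g y) :
    Measurable fun p : ProbabilityMeasure Y => ∫ y, g y ∂(p : Measure Y) := by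
  have : (fun p : ProbabilityMeasure Y => ∫ y, g y ∂(p : Measure Y)) =
      fun p : ProbabilityMeasure Y => (∫⁻ y, ENNReal.ofReal (g y) ∂(p : Measure Y)).toReal := by
    ext p
    exact integral_eq_lintegral_of_nonneg_ae (ae_of_all _ hg0) hg.aestronglyMeasurable
  rw [this]
  exact (prob_measurable_lintegral hg.ennreal_ofReal).ennreal_toReal

/-- A finite `(f ⊕ ĝ)`-moment splits into its two parts; finiteness of the `ĝ` part makes `ĝ` finite
almost everywhere. -/
theorem moment_basics {X Y : Type*} [MeasurableSpace X] [MeasurableSpace Y]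
    {f : X → ℝ} {g : Y → ℝ} (hf : Measurable f) (hg : Measurable g)
    (hf0 : ∀ x, 0 ≤ f x) (hg0 : ∀ y, 0 ≤ g y)
    (Q : Measure (X × ProbabilityMeasure Y))
    (hmom : ∫⁻ z : X × ProbabilityMeasure Y,
      (ENNReal.ofReal (f z.1) + ∫⁻ y, ENNReal.ofReal (g y) ∂(z.2 : Measure Y)) ∂Q ≠ ⊤) :
    (∀ᵐ z ∂Q, Integrable g (z.2 : Measure Y)) ∧ Integrable (fun z => f z.1) Q ∧
      Integrable (fun z => ∫ y, g y ∂(z.2 : Measure Y)) Q := by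
  have hm1 : Measurable fun z : X × ProbabilityMeasure Y => ENNReal.ofReal (f z.1) :=
    (hf.comp measurable_fst).ennreal_ofReal
  have hm2 : Measurable fun z : X × ProbabilityMeasure Y =>
      ∫⁻ y, ENNReal.ofReal (g y) ∂(z.2 : Measure Y) :=
    (prob_measurable_lintegral hg.ennreal_ofReal).comp measurable_snd
  rw [lintegral_add_left hm1] at hmom
  obtain ⟨h1, h2⟩ := ENNReal.add_ne_top.1 hmom
  refine ⟨?_, ?_, ?_⟩
  · filter_upwards [ae_lt_top hm2 h2] with z hz
    refine ⟨hg.aestronglyMeasurable, ?_⟩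
    rwa [hasFiniteIntegral_iff_ofReal (ae_of_all _ hg0)]
  · refine ⟨(hf.comp measurable_fst).aestronglyMeasurable, ?_⟩
    rw [hasFiniteIntegral_iff_ofReal (ae_of_all Q fun z : X × ProbabilityMeasure Y => hf0 z.1)]
    exact h1.lt_top
  · refine (integrable_toReal_of_lintegral_ne_top hm2.aemeasurable h2).congr (ae_of_all _ ?_)
    intro z
    exact (integral_eq_lintegral_of_nonneg_ae (ae_of_all _ hg0) hg.aestronglyMeasurable).symm

/-! ### Weak convergence of laws on the graph of a function -/

/-- If `h` is approximated in `L¹`, eventually uniformly along a weakly convergent sequence, by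
bounded continuous functions, then the laws of `z ↦ (z, h z)` converge weakly, although `h` itself
need not be continuous. -/
theorem tendsto_graph {Z : Type*} [TopologicalSpace Z] [MeasurableSpace Z]
    [TopologicalSpace.PseudoMetrizableSpace Z] [SecondCountableTopology Z] [OpensMeasurableSpace Z]
    (P : Measure Z) [IsProbabilityMeasure P] (Pk : ℕ → Measure Z)
    [∀ k, IsProbabilityMeasure (Pk k)] (h : Z → ℝ) (hm : Measurable h)
    (hP : Integrable h P) (hPk : ∀ k, Integrable h (Pk k))
    (hw : ∀ ψ : BoundedContinuousFunction Z ℝ,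
      Tendsto (fun k => ∫ z, ψ z ∂(Pk k)) atTop (𝓝 (∫ z, ψ z ∂P)))
    (happ : ∀ ε > 0, ∃ u : BoundedContinuousFunction Z ℝ,
      ∫ z, |h z - u z| ∂P < ε ∧ ∀ᶠ k in atTop, ∫ z, |h z - u z| ∂(Pk k) < ε)
    (ψ : BoundedContinuousFunction (Z × ℝ) ℝ) :
    Tendsto (fun k => ∫ z, ψ (z, h z) ∂(Pk k)) atTop (𝓝 (∫ z, ψ (z, h z) ∂P)) := by
  let : PseudoMetricSpace Z := TopologicalSpace.pseudoMetrizableSpacePseudoMetric Z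
  have hT : Measurable fun z => (z, h z) := measurable_id.prodMk hm
  let ν : ProbabilityMeasure (Z × ℝ) :=
    ⟨P.map fun z => (z, h z), Measure.isProbabilityMeasure_map hT.aemeasurable⟩
  let νk : ℕ → ProbabilityMeasure (Z × ℝ) := fun k =>
    ⟨(Pk k).map fun z => (z, h z), Measure.isProbabilityMeasure_map hT.aemeasurable⟩
  have key : Tendsto νk atTop (𝓝 ν) := by
    rw [tendsto_iff_forall_lipschitz_integral_tendsto]
    rintro φ ⟨C, hC⟩ ⟨L, hL⟩
    have hφc : Continuous φ := hL.continuous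
    have e (Q : Measure Z) : ∫ ω, φ ω ∂(Q.map fun z => (z, h z)) = ∫ z, φ (z, h z) ∂Q :=
      integral_map hT.aemeasurable hφc.measurable.aestronglyMeasurable
    change Tendsto (fun k => ∫ ω, φ ω ∂((Pk k).map fun z => (z, h z))) atTop
      (𝓝 (∫ ω, φ ω ∂(P.map fun z => (z, h z))))
    simp_rw [e]
    let Φ : BoundedContinuousFunction (Z × ℝ) ℝ := ⟨⟨φ, hφc⟩, C, hC⟩
    rw [Metric.tendsto_atTop']
    intro ε hε
    have hL1 : (0 : ℝ) < L + 1 := by positivity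
    -- an `L¹` error `ε / (3 (L + 1))` in `h` changes the integral of `φ (z, h z)` by at most `ε / 3`
    obtain ⟨u, hu, huk⟩ := happ (ε / (3 * (L + 1))) (by positivity)
    let w : BoundedContinuousFunction Z ℝ :=
      Φ.compContinuous ⟨fun z => (z, u z), by fun_prop⟩
    have hLε : (L : ℝ) * (ε / (3 * (L + 1))) ≤ ε / 3 := by
      rw [mul_div_assoc', div_le_div_iff₀ (by positivity) (by positivity)]
      nlinarith
    have est (Q : Measure Z) [IsProbabilityMeasure Q] (hQ : Integrable h Q)
        (hlt : ∫ z, |h z - u z| ∂Q < ε / (3 * (L + 1))) :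
        |∫ z, φ (z, h z) ∂Q - ∫ z, w z ∂Q| ≤ ε / 3 := by
      have i1 : Integrable (fun z => φ (z, h z)) Q := by
        have := (Φ.integrable (Q.map fun z => (z, h z)))
        exact this.comp_measurable hT
      have i2 : Integrable (fun z => w z) Q := w.integrable Q
      have i3 : Integrable (fun z => |h z - u z|) Q := (hQ.sub (u.integrable Q)).abs
      rw [← integral_sub i1 i2]
      calc |∫ z, (φ (z, h z) - w z) ∂Q| ≤ ∫ z, |φ (z, h z) - w z| ∂Q :=
            abs_integral_le_integral_abs
        _ ≤ ∫ z, L * |h z - u z| ∂Q := by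
            refine integral_mono (i1.sub i2).abs (i3.const_mul _) fun z => ?_
            have := hL.dist_le_mul (z, h z) (z, u z)
            simpa [Prod.dist_eq, Real.dist_eq] using! this
        _ = L * ∫ z, |h z - u z| ∂Q := integral_const_mul _ _
        _ ≤ L * (ε / (3 * (L + 1))) := by gcongr
        _ ≤ ε / 3 := hLε
    have hwk := (Metric.tendsto_nhds.1 (hw w)) (ε / 3) (by positivity)
    obtain ⟨N, hN⟩ := eventually_atTop.1 (hwk.and huk)
    refine ⟨N, fun k hk => ?_⟩
    obtain ⟨a1, a2⟩ := hN k hk.le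
    have b1 := est P hP hu
    have b2 := est (Pk k) (hPk k) a2
    rw [Real.dist_eq] at a1 ⊢
    rw [abs_lt] at a1 ⊢
    rw [abs_le] at b1 b2
    constructor <;> linarith [a1.1, a1.2, b1.1, b1.2, b2.1, b2.2]
  have := (ProbabilityMeasure.tendsto_iff_forall_integral_tendsto.1 key) ψ
  have e (Q : Measure Z) : ∫ ω, ψ ω ∂(Q.map fun z => (z, h z)) = ∫ z, ψ (z, h z) ∂Q :=
    integral_map hT.aemeasurable ψ.continuous.measurable.aestronglyMeasurable
  change Tendsto (fun k => ∫ ω, ψ ω ∂((Pk k).map fun z => (z, h z))) atTop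
      (𝓝 (∫ ω, ψ ω ∂(P.map fun z => (z, h z)))) at this
  simpa only [e] using this

/-! ### Truncation and the comparison of topologies -/

/-- Truncation of a nonnegative continuous function at level `n`. -/
noncomputable def trunc {Y : Type*} [TopologicalSpace Y] (g : Y → ℝ) (hg : Continuous g)
    (hg0 : ∀ y, 0 ≤ g y) (n : ℕ) : BoundedContinuousFunction Y ℝ :=
  BoundedContinuousFunction.ofNormedAddCommGroup (fun y => min (g y) n) (by fun_prop) n
    (fun y => by
      rw [Real.norm_eq_abs, abs_of_nonneg (le_min (hg0 y) n.cast_nonneg)]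
      exact min_le_right _ _)

/-- The bounded continuous function `p ↦ ∫ φ dp` on the space of probability measures. -/
noncomputable def intBCF {Y : Type*} [MeasurableSpace Y] [TopologicalSpace Y]
    [OpensMeasurableSpace Y] (φ : BoundedContinuousFunction Y ℝ) :
    BoundedContinuousFunction (ProbabilityMeasure Y) ℝ :=
  BoundedContinuousFunction.ofNormedAddCommGroup (fun p => ∫ y, φ y ∂(p : Measure Y))
    (ProbabilityMeasure.continuous_integral_boundedContinuousFunction φ) ‖φ‖
    (fun p => φ.norm_integral_le_norm (p : Measure Y))

theorem tendsto_min_nat (a : ℝ) : Tendsto (fun n : ℕ => min a (n : ℝ)) atTop (𝓝 a) := by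
  refine tendsto_const_nhds.congr' ?_
  filter_upwards [eventually_ge_atTop ⌈a⌉₊] with n hn
  exact (min_eq_left (Nat.ceil_le.1 hn)).symm

/-- If `P` is a probability measure on `X × P(Y)` with finite `(f ⊕ ĝ)`-moment, where
`ĝ(p) = ∫ g dp`, then `P` gives full mass to `X × P_g(Y)`; moreover the spaces
`P_{f⊕ĝ}(X × P(Y))` and `P_{f⊕ĝ}(X × P_g(Y))` coincide with equal topologies: a sequence
converges in the former (weakly, plus convergence of the moments) if and only if it converges
in the latter, whose topology is characterized through the embedding `p ↦ (p, ∫ g dp)` of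
`P_g(Y)` into `P(Y) × ℝ`. -/
theorem stmt12 {X Y : Type*}
    [MeasurableSpace X] [TopologicalSpace X] [PolishSpace X] [BorelSpace X]
    [MeasurableSpace Y] [TopologicalSpace Y] [PolishSpace Y] [BorelSpace Y]
    (f : X → ℝ) (g : Y → ℝ) (hfc : Continuous f) (hgc : Continuous g)
    (hf1 : ∀ x, 1 ≤ f x) (hg1 : ∀ y, 1 ≤ g y)
    (P : Measure (X × ProbabilityMeasure Y)) [IsProbabilityMeasure P]
    (hmom : ∫⁻ z : X × ProbabilityMeasure Y,
      (ENNReal.ofReal (f z.1) + ∫⁻ y, ENNReal.ofReal (g y) ∂(z.2 : Measure Y)) ∂P ≠ ⊤) :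
    P {z : X × ProbabilityMeasure Y | ¬ Integrable g (z.2 : Measure Y)} = 0 ∧
    ∀ (Pk : ℕ → Measure (X × ProbabilityMeasure Y)),
      (∀ k, IsProbabilityMeasure (Pk k)) →
      (∀ k, ∫⁻ z : X × ProbabilityMeasure Y,
        (ENNReal.ofReal (f z.1) + ∫⁻ y, ENNReal.ofReal (g y) ∂(z.2 : Measure Y)) ∂(Pk k) ≠ ⊤) →
      (((∀ ψ : BoundedContinuousFunction (X × ProbabilityMeasure Y) ℝ,
          Tendsto (fun k => ∫ z, ψ z ∂(Pk k)) atTop (𝓝 (∫ z, ψ z ∂P))) ∧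
        Tendsto (fun k => ∫ z : X × ProbabilityMeasure Y,
            (f z.1 + ∫ y, g y ∂(z.2 : Measure Y)) ∂(Pk k)) atTop
          (𝓝 (∫ z : X × ProbabilityMeasure Y,
            (f z.1 + ∫ y, g y ∂(z.2 : Measure Y)) ∂P)))
        ↔
       ((∀ ψ : BoundedContinuousFunction (X × ProbabilityMeasure Y × ℝ) ℝ,
          Tendsto (fun k => ∫ z : X × ProbabilityMeasure Y,
              ψ (z.1, z.2, ∫ y, g y ∂(z.2 : Measure Y)) ∂(Pk k)) atTop
            (𝓝 (∫ z : X × ProbabilityMeasure Y,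
              ψ (z.1, z.2, ∫ y, g y ∂(z.2 : Measure Y)) ∂P))) ∧
        Tendsto (fun k => ∫ z : X × ProbabilityMeasure Y,
            (f z.1 + ∫ y, g y ∂(z.2 : Measure Y)) ∂(Pk k)) atTop
          (𝓝 (∫ z : X × ProbabilityMeasure Y,
            (f z.1 + ∫ y, g y ∂(z.2 : Measure Y)) ∂P)))) := by
  have hf0 : ∀ x, 0 ≤ f x := fun x => zero_le_one.trans (hf1 x)
  have hg0 : ∀ y, 0 ≤ g y := fun y => zero_le_one.trans (hg1 y)
  obtain ⟨hPae, hPf, hPg⟩ := moment_basics hfc.measurable hgc.measurable hf0 hg0 P hmom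
  refine ⟨ae_iff.1 hPae, ?_⟩
  intro Pk hPk hmomk
  have hk := fun k => moment_basics hfc.measurable hgc.measurable hf0 hg0 (Pk k) (hmomk k)
  obtain ⟨hsc, hom⟩ := prob_secondCountable_opensMeasurable Y
  refine ⟨fun ⟨hw, hH⟩ => ⟨fun ψ => ?_, hH⟩, fun ⟨hw, hH⟩ => ⟨fun ψ => ?_, hH⟩⟩
  · have hm : Measurable fun z : X × ProbabilityMeasure Y => ∫ y, g y ∂(z.2 : Measure Y) :=
      (prob_measurable_integral hgc.measurable hg0).comp measurable_snd
    let v (n : ℕ) : BoundedContinuousFunction (X × ProbabilityMeasure Y) ℝ :=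
      (intBCF (trunc g hgc hg0 n)).compContinuous ⟨Prod.snd, continuous_snd⟩
    let u (n : ℕ) : BoundedContinuousFunction (X × ProbabilityMeasure Y) ℝ :=
      (trunc f hfc hf0 n).compContinuous ⟨Prod.fst, continuous_fst⟩
    have hv (n : ℕ) (z : X × ProbabilityMeasure Y) :
        v n z = ∫ y, min (g y) n ∂(z.2 : Measure Y) := rfl
    have huf (n : ℕ) (z : X × ProbabilityMeasure Y) : u n z ≤ f z.1 := min_le_left _ _
    have hvg (n : ℕ) (z : X × ProbabilityMeasure Y) (hz : Integrable g (z.2 : Measure Y)) :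
        v n z ≤ ∫ y, g y ∂(z.2 : Measure Y) := by
      rw [hv]
      exact integral_mono ((trunc g hgc hg0 n).integrable _) hz fun y => min_le_left _ _
    -- the truncation error of `ĝ` alone is at most that of `f ⊕ ĝ`, whose moments converge
    have est (Q : Measure (X × ProbabilityMeasure Y)) [IsProbabilityMeasure Q]
        (hQae : ∀ᵐ z ∂Q, Integrable g (z.2 : Measure Y))
        (hQf : Integrable (fun z => f z.1) Q)
        (hQg : Integrable (fun z => ∫ y, g y ∂(z.2 : Measure Y)) Q) (n : ℕ) :
        ∫ z, |(∫ y, g y ∂(z.2 : Measure Y)) - v n z| ∂Q ≤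
          ∫ z, (f z.1 + ∫ y, g y ∂(z.2 : Measure Y)) ∂Q - ∫ z, (u n + v n) z ∂Q := by
      have hQH : Integrable (fun z => f z.1 + ∫ y, g y ∂(z.2 : Measure Y)) Q := hQf.add hQg
      rw [← integral_sub hQH ((u n + v n).integrable Q)]
      refine integral_mono_ae (hQg.sub ((v n).integrable Q)).abs
        (hQH.sub ((u n + v n).integrable Q)) ?_
      filter_upwards [hQae] with z hz
      have h1 := huf n z
      have h2 := hvg n z hz
      change |_| ≤ (f z.1 + ∫ y, g y ∂(z.2 : Measure Y)) - (u n z + v n z)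
      rw [abs_of_nonneg (by linarith)]
      linarith
    have hdom : Tendsto (fun n => ∫ z, (u n + v n) z ∂P) atTop
        (𝓝 (∫ z, (f z.1 + ∫ y, g y ∂(z.2 : Measure Y)) ∂P)) := by
      refine tendsto_integral_of_dominated_convergence
        (fun z => f z.1 + ∫ y, g y ∂(z.2 : Measure Y))
        (fun n => ((u n + v n).integrable P).aestronglyMeasurable) (hPf.add hPg) ?_ ?_
      · intro n
        filter_upwards [hPae] with z hz
        have h1 := huf n z
        have h2 := hvg n z hz
        have h3 : 0 ≤ u n z := le_min (hf0 _) n.cast_nonneg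
        have h4 : 0 ≤ v n z := integral_nonneg fun y => le_min (hg0 y) n.cast_nonneg
        change |u n z + v n z| ≤ _
        rw [abs_of_nonneg (by linarith)]
        linarith
      · filter_upwards [hPae] with z hz
        refine (tendsto_min_nat (f z.1)).add ?_
        change Tendsto (fun n : ℕ => ∫ y, min (g y) n ∂(z.2 : Measure Y)) atTop _
        refine tendsto_integral_of_dominated_convergence g
          (fun n => ((trunc g hgc hg0 n).integrable _).aestronglyMeasurable) hz ?_ ?_
        · intro n
          refine ae_of_all _ fun y => ?_
          rw [Real.norm_eq_abs, abs_of_nonneg (le_min (hg0 y) n.cast_nonneg)]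
          exact min_le_left _ _
        · exact ae_of_all _ fun y => tendsto_min_nat (g y)
    have happ : ∀ ε > 0, ∃ u : BoundedContinuousFunction (X × ProbabilityMeasure Y) ℝ,
        ∫ z, |(∫ y, g y ∂(z.2 : Measure Y)) - u z| ∂P < ε ∧
        ∀ᶠ k in atTop, ∫ z, |(∫ y, g y ∂(z.2 : Measure Y)) - u z| ∂(Pk k) < ε := by
      intro ε hε
      obtain ⟨n, hn⟩ := (hdom.eventually_const_lt (sub_lt_self _ hε)).exists
      have hn' : ∫ z, (f z.1 + ∫ y, g y ∂(z.2 : Measure Y)) ∂P - ∫ z, (u n + v n) z ∂P < ε := by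
        linarith
      refine ⟨v n, (est P hPae hPf hPg n).trans_lt hn', ?_⟩
      filter_upwards [(hH.sub (hw (u n + v n))).eventually_lt_const hn'] with k hk'
      exact (est (Pk k) (hk k).1 (hk k).2.1 (hk k).2.2 n).trans_lt hk'
    exact tendsto_graph P Pk (fun z => ∫ y, g y ∂(z.2 : Measure Y)) hm hPg
      (fun k => (hk k).2.2) hw happ
      (ψ.compContinuous ⟨fun q : (X × ProbabilityMeasure Y) × ℝ => (q.1.1, q.1.2, q.2),
        by fun_prop⟩)
  · exact hw (ψ.compContinuous ⟨fun q : X × ProbabilityMeasure Y × ℝ => (q.1, q.2.1),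
      by fun_prop⟩)
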